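/- For every prime p with p ≡ 5 (mod 12) or p ≡ 11 (mod 12), the rank of the elliptic curve y² = x³ − p³ over ℚ is at most 1. -/

import Mathlib

open TensorProduct

/-- The quadratic twist `y² = x³ − p³` of the elliptic curve `y² = x³ − 1`. -/
noncomputable def E0twist (D : ℤ) : WeierstrassCurve.Affine ℚ :=
  { a₁ := 0, a₂ := 0, a₃ := 0, a₄ := 0, a₆ := -(D : ℚ) ^ 3 }

/-- The Mordell–Weil rank of a Weierstrass curve over `ℚ`: the dimension of the
`ℚ`-vector space `E(ℚ) ⊗_ℤ ℚ`. -/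
noncomputable def mwRank (W : WeierstrassCurve.Affine ℚ) : Cardinal :=
  Module.rank ℚ (ℚ ⊗[ℤ] W.Point)

/-!
Let `ω` be a primitive cube root of unity. On `E : y² = x³ - p³` the map `δ(P) = x(P) - pω` to
`ℚ(ω)ˣ` is a homomorphism modulo squares, and its kernel is `2E(ℚ)`: if `δ(P)` is a square then so
is its norm `x² + px + p²`, hence also `x - p`, and square roots of these data give a half of `P`.
Writing rational points with coprime numerators and denominators leads to quartics `d a⁴ + k a² b²
+ e b⁴ = c²`, where `3` divides `k` and `d e` but `9` does not divide `d e`; modulo `3` they force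
`d` or `e` to be `1`. As `p ≡ 2` modulo `3`, this shows first that the norm of `δ(P)` is `1` or
`3` modulo squares, so that it becomes a square after adding the `2`-torsion point `T = (p, 0)` if
necessary, and then that `δ(P)` itself is `1` or `-p` modulo squares. Thus `E(ℚ) / 2E(ℚ)` is
generated by `T` and at most one further point. Comparing heights of `P + Q` and `P - Q` shows
that `E(ℚ)` is finitely generated, and the rank is at most one by Nakayama's lemma.
-/

/-! ### Generators modulo `n` and the rank -/

section

variable {G : Type*} [AddCommGroup G]

theorem finiteIndex_range_nsmul_of_closure_sup_eq_top {s : Set G} (hs : s.Finite) {n : ℕ}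
    (hn : n ≠ 0) (htop : AddSubgroup.closure s ⊔ (nsmulAddMonoidHom n : G →+ G).range = ⊤) :
    (nsmulAddMonoidHom n : G →+ G).range.FiniteIndex := by
  set R := (nsmulAddMonoidHom n : G →+ G).range
  have hgen : AddSubgroup.closure (QuotientAddGroup.mk' R '' s) = ⊤ := by
    rw [← AddMonoidHom.map_closure, ← AddSubgroup.map_top_of_surjective _
      (QuotientAddGroup.mk'_surjective R), ← htop, AddSubgroup.map_sup,
      (AddSubgroup.map_eq_bot_iff R).mpr (QuotientAddGroup.ker_mk' R).ge, sup_bot_eq]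
  have : AddGroup.FG (G ⧸ R) := AddGroup.fg_iff.mpr ⟨_, hgen, hs.image _⟩
  have htors : IsAddTorsion (G ⧸ R) := by
    intro q
    obtain ⟨g, rfl⟩ := QuotientAddGroup.mk_surjective q
    refine isOfFinAddOrder_iff_nsmul_eq_zero.mpr ⟨n, hn.bot_lt, ?_⟩
    exact (QuotientAddGroup.eq_zero_iff _).mpr ⟨g, rfl⟩
  have := AddCommGroup.finite_of_fg_isAddTorsion _ htors
  exact AddSubgroup.finiteIndex_of_finite_quotient

theorem span_tmul_one_eq_top_of_sup_eq_top [AddGroup.FG G] {n : ℕ} (hn : n ≠ 1) {s : Set G}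
    (hs : AddSubgroup.closure s ⊔ AddCommGroup.torsion G ⊔
      (nsmulAddMonoidHom n : G →+ G).range = ⊤) :
    Submodule.span ℚ ((fun g : G ↦ (1 : ℚ) ⊗ₜ[ℤ] g) '' s) = ⊤ := by
  set V := Submodule.span ℚ ((fun g : G ↦ (1 : ℚ) ⊗ₜ[ℤ] g) '' s)
  let N : Submodule ℤ G := (V.restrictScalars ℤ).comap (TensorProduct.mk ℤ ℚ G 1)
  have hsN : AddSubgroup.closure s ≤ N.toAddSubgroup :=
    (AddSubgroup.closure_le _).mpr fun g hg ↦ Submodule.subset_span ⟨g, hg, rfl⟩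
  have hdiv {k : ℤ} (hk : k ≠ 0) {g : G} (hg : k • g ∈ N) : g ∈ N := by
    have hk' : (k : ℚ) ≠ 0 := mod_cast hk
    have := V.smul_mem (k : ℚ)⁻¹ hg
    rwa [TensorProduct.mk_apply, TensorProduct.tmul_smul, ← Int.cast_smul_eq_zsmul ℚ,
      inv_smul_smul₀ hk'] at this
  have htN : AddCommGroup.torsion G ≤ N.toAddSubgroup := by
    intro g hg
    obtain ⟨k, hk, hkg⟩ := isOfFinAddOrder_iff_nsmul_eq_zero.mp hg
    exact hdiv (k := k) (mod_cast hk.ne') (by rw [natCast_zsmul, hkg]; exact N.zero_mem)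
  have hle : (⊤ : Submodule ℤ G) ≤ N ⊔ Ideal.span {(n : ℤ)} • ⊤ := by
    intro g _
    obtain ⟨x, hx, y, ⟨z, rfl⟩, rfl⟩ := AddSubgroup.mem_sup.mp (hs.ge (AddSubgroup.mem_top g))
    refine Submodule.add_mem_sup (sup_le hsN htN hx) ?_
    rw [nsmulAddMonoidHom_apply, ← natCast_zsmul]
    exact Submodule.smul_mem_smul (Ideal.mem_span_singleton_self _) trivial
  have : Module.Finite ℤ G := Module.Finite.iff_addGroup_fg.mpr inferInstance
  obtain ⟨r, hr1, hrN⟩ := Submodule.exists_sub_one_mem_and_smul_le_of_fg_of_le_sup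
    Module.Finite.fg_top le_top hle
  have hr : r ≠ 0 := by
    rintro rfl
    rw [zero_sub, Ideal.mem_span_singleton, dvd_neg, Int.natCast_dvd_ofNat] at hr1
    exact hn (Nat.dvd_one.mp hr1)
  refine eq_top_iff.mpr fun v _ ↦ ?_
  induction v with
  | zero => exact V.zero_mem
  | add x y hx hy => exact V.add_mem (hx trivial) (hy trivial)
  | tmul a g =>
    have := V.smul_mem a (hdiv hr (hrN (Submodule.smul_mem_pointwise_smul g r ⊤ trivial)))
    rwa [TensorProduct.mk_apply, TensorProduct.smul_tmul', smul_eq_mul, mul_one] at this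

theorem rank_rat_tensor_le_of_sup_eq_top [AddGroup.FG G] {n : ℕ} (hn : n ≠ 1) {s : Set G}
    (hs : AddSubgroup.closure s ⊔ AddCommGroup.torsion G ⊔
      (nsmulAddMonoidHom n : G →+ G).range = ⊤) :
    Module.rank ℚ (ℚ ⊗[ℤ] G) ≤ Cardinal.mk s := by
  rw [← rank_top, ← span_tmul_one_eq_top_of_sup_eq_top hn hs]
  exact (rank_span_le _).trans Cardinal.mk_image_le

end

open WeierstrassCurve WeierstrassCurve.Affine WeierstrassCurve.Affine.Point

/-! ### The height descent -/

section

variable {F : Type*} [Field F] {W : WeierstrassCurve.Affine F}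

theorem eval_addSubMap (s t u : F) :
    (fun i ↦ (addSubMap W i).eval ![s, t, u]) =
      ![s ^ 2 - W.b₄ * s * u - W.b₆ * t * u - W.b₈ * u ^ 2,
        2 * t * s + W.b₂ * s * u + W.b₄ * t * u + W.b₆ * u ^ 2, t ^ 2 - 4 * s * u] := by
  funext i
  fin_cases i <;> simp [addSubMap]

variable [DecidableEq F]

theorem eval_addSubMap_sym2x_self (P : W.Point) :
    ∃ c : F, (fun i ↦ (addSubMap W i).eval (P.sym2x P)) = c • (P + P).sym2x 0 := by
  rcases P with _ | ⟨x, y, h⟩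
  · refine ⟨1, ?_⟩
    rw [← zero_def, add_zero, sym2x_zero_zero, eval_addSubMap]
    simp
  have hE := (equation_iff ..).mp h.1
  have hψ : y - W.negY x y = 2 * y + W.a₁ * x + W.a₃ := by rw [negY]; ring
  have hψ_sq : (y - W.negY x y) ^ 2 = 4 * x ^ 3 + W.b₂ * x ^ 2 + 2 * W.b₄ * x + W.b₆ := by
    simp only [hψ, b₂, b₄, b₆]
    linear_combination 4 * hE
  rw [sym2x_some_some, eval_addSubMap]
  by_cases hy : y = W.negY x y
  · rw [add_self_of_Y_eq hy, sym2x_zero_zero]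
    refine ⟨x ^ 4 - W.b₄ * x ^ 2 - 2 * W.b₆ * x - W.b₈, ?_⟩
    rw [← hy, sub_self] at hψ_sq
    rw [Matrix.smul_vec3]
    exact Matrix.vec3_eq (by simp only [smul_eq_mul]; ring)
      (by simp only [smul_eq_mul]; linear_combination -hψ_sq) (by simp only [smul_eq_mul]; ring)
  · rw [add_self_of_Y_ne hy, sym2x_some_zero, slope_of_Y_ne rfl hy]
    have hψ0 : y - W.negY x y ≠ 0 := sub_ne_zero.mpr hy
    refine ⟨(y - W.negY x y) ^ 2, ?_⟩
    generalize y - W.negY x y = ψ at hψ hψ_sq hψ0 ⊢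
    simp only [Matrix.smul_vec3, smul_eq_mul]
    refine Matrix.vec3_eq ?_ (by linear_combination -hψ_sq) (by ring)
    simp only [addX, b₄, b₆, b₈]
    field_simp
    rw [hψ]
    linear_combination (8 * x + W.a₁ ^ 2 + 4 * W.a₂) * hE

theorem eval_addSubMap_sym2x_of_X_ne {x₁ y₁ x₂ y₂ : F} (h₁ : W.Nonsingular x₁ y₁)
    (h₂ : W.Nonsingular x₂ y₂) (hx : x₁ ≠ x₂) :
    (fun i ↦ (addSubMap W i).eval ((some x₁ y₁ h₁).sym2x (some x₂ y₂ h₂))) =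
      (x₁ - x₂) ^ 2 •
        (some x₁ y₁ h₁ + some x₂ y₂ h₂).sym2x (some x₁ y₁ h₁ - some x₂ y₂ h₂) := by
  have hE₁ := (equation_iff ..).mp h₁.1
  have hE₂ := (equation_iff ..).mp h₂.1
  have hd : x₁ - x₂ ≠ 0 := sub_ne_zero.mpr hx
  rw [sub_eq_add_neg (some x₁ y₁ h₁), neg_some, add_of_X_ne hx, add_of_X_ne hx]
  simp only [sym2x_some_some, slope_of_X_ne hx, addX, negY, eval_addSubMap, Matrix.smul_vec3,
    smul_eq_mul, b₂, b₄, b₆, b₈]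
  refine Matrix.vec3_eq ?_ ?_ (by ring) <;> field_simp
  · grind
  · linear_combination -2 * (hE₁ + hE₂)

theorem exists_eval_addSubMap_sym2x_eq_smul (P Q : W.Point) :
    ∃ c : F, (fun i ↦ (addSubMap W i).eval (P.sym2x Q)) = c • (P + Q).sym2x (P - Q) := by
  rcases P with _ | ⟨x₁, y₁, h₁⟩
  · refine ⟨1, ?_⟩
    rw [← zero_def, zero_add, zero_sub, sym2x_neg_right, one_smul]
    cases Q <;> simp [← zero_def, eval_addSubMap, pow_two, two_mul]
  rcases Q with _ | ⟨x₂, y₂, h₂⟩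
  · refine ⟨1, ?_⟩
    rw [← zero_def, add_zero, sub_zero, one_smul]
    simp [eval_addSubMap, pow_two, two_mul]
  by_cases hx : x₁ = x₂
  · rcases X_eq_iff.mp hx with h | h
    · rw [h, sub_self]
      exact eval_addSubMap_sym2x_self _
    · rw [h, sym2x_neg_left, neg_add_cancel, ← neg_add', sym2x_neg_right, sym2x_comm 0]
      exact eval_addSubMap_sym2x_self _
  · exact ⟨_, eval_addSubMap_sym2x_of_X_ne h₁ h₂ hx⟩

end

section

open Height
variable {K : Type*} [Field K] [AdmissibleAbsValues K] {W : WeierstrassCurve.Affine K}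

/-- The naive logarithmic height of a point: the height of its `x`-coordinate as a point of `ℙ¹`. -/
noncomputable def naiveHeight (P : W.Point) : ℝ :=
  logHeight P.xRep

theorem naiveHeight_some {x y : K} (h : W.Nonsingular x y) :
    naiveHeight (some x y h) = logHeight₁ x := by
  rw [naiveHeight, xRep_some, logHeight₁_eq_logHeight]

theorem exists_abs_logHeight_sym2x_sub_le :
    ∃ C, ∀ P Q : W.Point, |logHeight (P.sym2x Q) - (naiveHeight P + naiveHeight Q)| ≤ C := by
  obtain ⟨C, hC⟩ := abs_logHeight_sym2_sub_le K
  have hvec (R : W.Point) : R.xRep = ![R.xRep 0, R.xRep 1] := by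
    ext i; fin_cases i <;> rfl
  refine ⟨C, fun P Q ↦ ?_⟩
  rw [naiveHeight, naiveHeight, hvec P, hvec Q]
  exact hC (hvec P ▸ P.xRep_ne_zero) (hvec Q ▸ Q.xRep_ne_zero)

theorem exists_abs_naiveHeight_add_add_naiveHeight_sub_le [DecidableEq K] [W.IsElliptic] :
    ∃ C, ∀ P Q : W.Point,
      |naiveHeight (P + Q) + naiveHeight (P - Q) - 2 * (naiveHeight P + naiveHeight Q)| ≤ C := by
  obtain ⟨C₁, hC₁⟩ := exists_abs_logHeight_sym2x_sub_le (W := W)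
  obtain ⟨C₂, hC₂⟩ := abs_logHeight_addSubMap_sub_two_mul_logHeight_le W
  refine ⟨3 * C₁ + C₂, fun P Q ↦ ?_⟩
  obtain ⟨c, hc⟩ := exists_eval_addSubMap_sym2x_eq_smul P Q
  have hc0 : c ≠ 0 := by
    rintro rfl
    exact addSubMap_ne_zero W (P.sym2x_ne_zero Q) (by rw [hc, zero_smul])
  have hdouble := hC₂ (P.sym2x Q)
  rw [hc, logHeight_smul_eq_logHeight _ hc0] at hdouble
  have hsum := hC₁ (P + Q) (P - Q)
  have hpair := hC₁ P Q
  rw [abs_le] at *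
  constructor <;> linarith

instance [Northcott (logHeight₁ (K := K))] : Northcott (naiveHeight : W.Point → ℝ) where
  finite_le B := by
    refine Set.Finite.of_finite_fibers xRep ?_ ?_
    · refine (((Northcott.finite_le (h := logHeight₁ (K := K)) B).image
        fun x ↦ ![x, 1]).insert ![1, 0]).subset ?_
      rintro _ ⟨_ | ⟨x, y, h⟩, hB, rfl⟩
      · exact .inl rfl
      · exact .inr ⟨x, (naiveHeight_some h).ge.trans hB, rfl⟩
    · rintro _ ⟨P, -, rfl⟩
      exact (Set.toFinite {P, -P}).subset fun Q hQ ↦ eq_or_eq_neg_of_xRep_eq_xRep hQ.2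

theorem fg_point_of_finiteIndex_range_two_nsmul [DecidableEq K] [W.IsElliptic]
    [Northcott (logHeight₁ (K := K))]
    (hfin : (nsmulAddMonoidHom 2 : W.Point →+ W.Point).range.FiniteIndex) :
    AddGroup.FG W.Point := by
  obtain ⟨C, hC⟩ := exists_abs_naiveHeight_add_add_naiveHeight_sub_le (W := W)
  exact AddCommGroup.fg_of_descent' (h := naiveHeight) hfin (fun _ ↦ logHeight_nonneg _) hC

end

/-! ### The two-descent map -/

section

variable {F : Type*} [Field F] {W : WeierstrassCurve.Affine F}

theorem equation_iff_of_isCharNeTwoNF [W.IsCharNeTwoNF] {x y : F} :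
    W.Equation x y ↔ y ^ 2 = x ^ 3 + W.a₂ * x ^ 2 + W.a₄ * x + W.a₆ := by
  simp [equation_iff]

variable {A : Type*} [CommRing A] [Algebra F A]

/-- The map `x - θ` of a `2`-descent, where `θ` is a root in `A` of the cubic of the curve. It takes
values in `A` rather than in `A / A²`, and sends the point at infinity to `1`. -/
noncomputable def descentMap (θ : A) : W.Point → A
  | .zero => 1
  | .some x _ _ => algebraMap F A x - θ

@[simp]
theorem descentMap_zero (θ : A) : descentMap θ (0 : W.Point) = 1 :=
  rfl

@[simp]
theorem descentMap_some (θ : A) {x y : F} (h : W.Nonsingular x y) :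
    descentMap θ (some x y h) = algebraMap F A x - θ :=
  rfl

variable [DecidableEq F] [W.IsCharNeTwoNF]

theorem exists_add_self_eq_some [W.IsElliptic] {x y : F} (h : W.Nonsingular x y) {σ₁ σ₂ : F}
    (h₁ : 3 * x + W.a₂ = σ₁ ^ 2 - 2 * σ₂)
    (h₂ : 3 * x ^ 2 + 2 * W.a₂ * x + W.a₄ = σ₂ ^ 2 - 2 * σ₁ * y) :
    ∃ Q : W.Point, Q + Q = some x y h := by
  -- The line of slope `σ₁` through `-P = (x, -y)` meets the curve doubly at `(u, v)`.
  obtain ⟨u, hu⟩ : ∃ u, u = x + σ₂ := ⟨_, rfl⟩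
  obtain ⟨v, hv⟩ : ∃ v, v = σ₁ * σ₂ - y := ⟨_, rfl⟩
  have hderiv : 3 * u ^ 2 + 2 * W.a₂ * u + W.a₄ = 2 * σ₁ * v := by
    rw [hu, hv]
    linear_combination h₂ + 2 * σ₂ * h₁
  have hQ : W.Nonsingular u v := by
    rw [← equation_iff_nonsingular, equation_iff_of_isCharNeTwoNF, hu, hv]
    linear_combination equation_iff_of_isCharNeTwoNF.mp h.1 - σ₂ * h₂ - σ₂ ^ 2 * h₁
  have h2v : 2 * v ≠ 0 := by
    have := ((nonsingular_iff' ..).mp hQ).2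
    contrapose! this
    simp only [a₁_of_isCharNeTwoNF, a₃_of_isCharNeTwoNF]
    exact ⟨by linear_combination -hderiv - σ₁ * this, by linear_combination this⟩
  have hneg : v - W.negY u v = 2 * v := by
    rw [negY, a₁_of_isCharNeTwoNF, a₃_of_isCharNeTwoNF]
    ring
  have hne : v ≠ W.negY u v := sub_ne_zero.mp (hneg ▸ h2v)
  have hslope : W.slope u u v v = σ₁ := by
    rw [slope_of_Y_ne rfl hne, hneg, a₁_of_isCharNeTwoNF, div_eq_iff h2v]
    linear_combination hderiv
  have hX : W.addX u u σ₁ = x := by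
    rw [addX, a₁_of_isCharNeTwoNF]
    linear_combination -2 * hu - h₁
  refine ⟨some u v hQ, ?_⟩
  simp only [add_self_of_Y_ne hne, some.injEq, hslope, addY, negAddY, negY, hX,
    a₁_of_isCharNeTwoNF, a₃_of_isCharNeTwoNF, true_and]
  linear_combination σ₁ * hu - hv

open Polynomial in
theorem isSquare_descentMap_mul_descentMap_mul_descentMap_add {θ : A}
    (hθ : θ ^ 3 + algebraMap F A W.a₂ * θ ^ 2 + algebraMap F A W.a₄ * θ + algebraMap F A W.a₆ = 0)
    (P Q : W.Point) :
    IsSquare (descentMap θ P * descentMap θ Q * descentMap θ (P + Q)) := by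
  rcases P with _ | ⟨x₁, y₁, h₁⟩
  · simp [← zero_def]
  rcases Q with _ | ⟨x₂, y₂, h₂⟩
  · simp [← zero_def]
  by_cases hxy : x₁ = x₂ ∧ y₁ = W.negY x₂ y₂
  · rw [add_of_Y_eq hxy.1 hxy.2]
    simp [hxy.1]
  · rw [add_some hxy]
    simp only [descentMap_some]
    have key := congrArg (aeval θ) (addPolynomial_slope h₁.1 h₂.1 hxy)
    generalize W.slope x₁ x₂ y₁ y₂ = ℓ at key ⊢
    rw [addPolynomial_eq] at key
    simp only [Cubic.toPoly, map_add, map_mul, map_pow, map_neg, map_sub, aeval_C, aeval_X,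
      a₁_of_isCharNeTwoNF, a₃_of_isCharNeTwoNF, _root_.map_zero, map_one, map_ofNat] at key
    refine ⟨algebraMap F A y₁ + algebraMap F A ℓ * (θ - algebraMap F A x₁), ?_⟩
    linear_combination -hθ - key

end

theorem isSquare_mul_of_isSquare_mul_of_isSquare_mul {F : Type*} [Field F] {a b c : F}
    (hb : b ≠ 0) (hab : IsSquare (a * b)) (hbc : IsSquare (b * c)) : IsSquare (a * c) := by
  have : a * c = a * b * (b * c) / (b * b) := by field_simp
  rw [this]
  exact (hab.mul hbc).div ⟨b, rfl⟩

/-! ### Cubics `t³ + k t² + l t` taking square values -/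

theorem exists_isCoprime_eq_div_sq_of_cubic_eq_sq {k l n : ℤ} {t w : ℚ}
    (h : t ^ 3 + k * t ^ 2 + l * t + n = w ^ 2) :
    ∃ A b m : ℤ, IsCoprime A b ∧ b ≠ 0 ∧ t = A / b ^ 2 ∧
      A ^ 3 + k * A ^ 2 * b ^ 2 + l * A * b ^ 4 + n * b ^ 6 = m ^ 2 := by
  obtain ⟨A, B, hB, hcop, rfl⟩ : ∃ A B : ℤ, 0 < B ∧ IsCoprime A B ∧ t = A / B :=
    ⟨t.num, t.den, mod_cast t.den_pos, Rat.isCoprime_num_den t, (Rat.num_div_den t).symm⟩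
  have hB0 : (B : ℚ) ≠ 0 := mod_cast hB.ne'
  have hsq : IsSquare ((B * (A ^ 3 + B * (k * A ^ 2 + l * A * B + n * B ^ 2)) : ℤ) : ℚ) := by
    refine ⟨w * B ^ 2, ?_⟩
    have hw : (w * B ^ 2) * (w * B ^ 2) = w ^ 2 * B ^ 4 := by ring
    rw [hw, ← h]
    push_cast
    field_simp
    ring
  obtain ⟨r, hr⟩ := Rat.isSquare_intCast_iff.mp hsq
  have hBcop : IsCoprime B (A ^ 3 + B * (k * A ^ 2 + l * A * B + n * B ^ 2)) :=
    hcop.symm.pow_right.add_mul_left_right _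
  obtain ⟨b, rfl⟩ : ∃ b, B = b ^ 2 := by
    obtain ⟨b, hb | hb⟩ := Int.sq_of_isCoprime hBcop (hr.trans (sq r).symm)
    · exact ⟨b, hb⟩
    · linarith [sq_nonneg b]
  have hb : b ≠ 0 := by
    rintro rfl
    norm_num at hB
  obtain ⟨m, rfl⟩ : b ∣ r := (Int.pow_dvd_pow_iff two_ne_zero).mp ⟨_, (sq r).trans hr.symm⟩
  refine ⟨A, b, m, (IsCoprime.pow_right_iff two_pos).mp hcop, hb, by push_cast; rfl, ?_⟩
  apply mul_left_cancel₀ (pow_ne_zero 2 hb)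
  linear_combination hr

theorem exists_squarefree_mul_sq (n : ℤ) (hn : n ≠ 0) :
    ∃ d a : ℤ, Squarefree d ∧ n = d * a ^ 2 := by
  obtain ⟨d, a, hda, hd⟩ := Nat.sq_mul_squarefree n.natAbs
  refine ⟨n.sign * d, a, ?_, ?_⟩
  · rwa [← Int.squarefree_natAbs, Int.natAbs_mul, Int.natAbs_sign_of_ne_zero hn, one_mul,
      Int.natAbs_natCast]
  · rw [mul_assoc, mul_comm (d : ℤ), ← Nat.cast_pow, ← Nat.cast_mul, hda, Int.sign_mul_natAbs]

theorem exists_quartic_eq_sq_of_cubic_eq_sq {k l A b m : ℤ} (hA : A ≠ 0) (hcop : IsCoprime A b)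
    (h : A ^ 3 + k * A ^ 2 * b ^ 2 + l * A * b ^ 4 = m ^ 2) :
    ∃ d e a c : ℤ, Squarefree d ∧ d * e = l ∧ A = d * a ^ 2 ∧
      d * a ^ 4 + k * a ^ 2 * b ^ 2 + e * b ^ 4 = c ^ 2 := by
  obtain ⟨d, a, hd, rfl⟩ := exists_squarefree_mul_sq A hA
  obtain ⟨hd0, ha0⟩ := mul_ne_zero_iff.mp hA
  have hdvd : d * a ∣ m := by
    obtain ⟨n, rfl⟩ : a ∣ m := (Int.pow_dvd_pow_iff two_ne_zero).mp
      ⟨d * (d ^ 2 * a ^ 4 + k * d * a ^ 2 * b ^ 2 + l * b ^ 4), by linear_combination -h⟩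
    rw [mul_comm]
    refine mul_dvd_mul_left a ((hd.dvd_pow_iff_dvd two_ne_zero).mp
      ⟨d ^ 2 * a ^ 4 + k * d * a ^ 2 * b ^ 2 + l * b ^ 4, ?_⟩)
    apply mul_left_cancel₀ ha0
    linear_combination -h
  obtain ⟨c, rfl⟩ := hdvd
  have hC : d ^ 2 * a ^ 4 + k * d * a ^ 2 * b ^ 2 + l * b ^ 4 = d * c ^ 2 := by
    apply mul_left_cancel₀ hA
    linear_combination h
  obtain ⟨e, rfl⟩ : d ∣ l := by
    refine (hcop.of_mul_left_left.pow_right (n := 4)).dvd_of_dvd_mul_right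
      ⟨c ^ 2 - d * a ^ 4 - k * a ^ 2 * b ^ 2, ?_⟩
    linear_combination hC
  refine ⟨d, e, a, c, hd, rfl, rfl, mul_left_cancel₀ hd0 ?_⟩
  linear_combination hC

theorem three_dvd_of_three_dvd_sq_add_sq {x y : ℤ} (h : 3 ∣ x ^ 2 + y ^ 2) : 3 ∣ x ∧ 3 ∣ y := by
  have hmod : ∀ a b : ZMod 3, a ^ 2 + b ^ 2 = 0 → a = 0 ∧ b = 0 := by decide
  have hdvd (n : ℤ) : (3 : ℤ) ∣ n ↔ (n : ZMod 3) = 0 := (ZMod.intCast_zmod_eq_zero_iff_dvd n 3).symm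
  rw [hdvd] at h
  exact (hmod x y (by exact_mod_cast h)).imp (hdvd x).mpr (hdvd y).mpr

theorem emod_three_eq_one_of_quartic_eq_sq {d j f a b c : ℤ} (hcop : IsCoprime a b)
    (hd : ¬ 3 ∣ d) (hf : ¬ 3 ∣ f)
    (h : d * a ^ 4 + 3 * j * a ^ 2 * b ^ 2 + 3 * f * b ^ 4 = c ^ 2) :
    d % 3 = 1 := by
  by_contra hd1
  obtain ⟨q, hq⟩ : 3 ∣ d + 1 := by lia
  obtain ⟨ha, ⟨c', rfl⟩⟩ : 3 ∣ a ^ 2 ∧ 3 ∣ c := three_dvd_of_three_dvd_sq_add_sq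
    ⟨q * a ^ 4 + j * a ^ 2 * b ^ 2 + f * b ^ 4, by linear_combination a ^ 4 * hq - h⟩
  have h3a : 3 ∣ a := Int.prime_three.dvd_of_dvd_pow ha
  obtain ⟨a', rfl⟩ := h3a
  have hfb : 3 ∣ f * b ^ 4 := ⟨c' ^ 2 - 9 * d * a' ^ 4 - 3 * j * a' ^ 2 * b ^ 2, by lia⟩
  have hb : 3 ∣ b :=
    Int.prime_three.dvd_of_dvd_pow ((Int.prime_three.dvd_or_dvd hfb).resolve_left hf)
  exact Int.prime_three.not_isUnit (hcop.isUnit_of_dvd' (dvd_mul_right 3 a') hb)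

theorem emod_three_eq_one_or_emod_three_eq_one_of_quartic_eq_sq {d e k a b c : ℤ}
    (hcop : IsCoprime a b) (hk : 3 ∣ k) (hde : 3 ∣ d * e) (hde' : ¬ 9 ∣ d * e)
    (h : d * a ^ 4 + k * a ^ 2 * b ^ 2 + e * b ^ 4 = c ^ 2) :
    d % 3 = 1 ∨ e % 3 = 1 := by
  obtain ⟨j, rfl⟩ := hk
  rcases Int.prime_three.dvd_or_dvd hde with ⟨f, rfl⟩ | ⟨f, rfl⟩
  · rw [mul_assoc, show (9 : ℤ) = 3 * 3 from rfl, mul_dvd_mul_iff_left three_ne_zero,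
      Int.prime_three.dvd_mul, not_or] at hde'
    refine .inr (emod_three_eq_one_of_quartic_eq_sq hcop.symm hde'.2 hde'.1 (j := j) (c := c) ?_)
    linear_combination h
  · rw [mul_left_comm, show (9 : ℤ) = 3 * 3 from rfl, mul_dvd_mul_iff_left three_ne_zero,
      Int.prime_three.dvd_mul, not_or] at hde'
    exact .inl (emod_three_eq_one_of_quartic_eq_sq hcop hde'.1 hde'.2 h)

theorem exists_squarefree_isSquare_mul_of_cubic_eq_sq {k l : ℤ} {t w : ℚ} (hk : 3 ∣ k)
    (hl : 3 ∣ l) (hl' : ¬ 9 ∣ l) (ht : t ≠ 0) (h : t ^ 3 + k * t ^ 2 + l * t = w ^ 2) :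
    ∃ d e : ℤ, Squarefree d ∧ d * e = l ∧ IsSquare (d * t) ∧ (d % 3 = 1 ∨ e % 3 = 1) := by
  rw [← add_zero (t ^ 3 + k * t ^ 2 + l * t), ← Int.cast_zero] at h
  obtain ⟨A, b, m, hcop, -, rfl, hm⟩ := exists_isCoprime_eq_div_sq_of_cubic_eq_sq h
  rw [zero_mul, add_zero] at hm
  have hA : A ≠ 0 := by rintro rfl; simp at ht
  obtain ⟨d, e, a, c, hd, rfl, rfl, hc⟩ := exists_quartic_eq_sq_of_cubic_eq_sq hA hcop hm
  have hcop' : IsCoprime a b := (IsCoprime.pow_left_iff two_pos).mp hcop.of_mul_left_right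
  refine ⟨d, e, hd, rfl, ⟨d * (a / b), by push_cast; ring⟩, ?_⟩
  exact emod_three_eq_one_or_emod_three_eq_one_of_quartic_eq_sq hcop' hk hl hl' hc

theorem abs_eq_of_dvd_prime_mul_prime {p q : ℕ} (hp : p.Prime) (hq : q.Prime) {d : ℤ}
    (h : d ∣ p * q) : |d| = 1 ∨ |d| = p ∨ |d| = q ∨ |d| = p * q := by
  rw [← Nat.cast_mul, Int.dvd_natCast, Nat.dvd_mul] at h
  obtain ⟨a, b, ha, hb, hab⟩ := h
  rw [Int.abs_eq_natAbs, ← hab]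
  rcases (Nat.dvd_prime hp).mp ha with rfl | rfl <;>
    rcases (Nat.dvd_prime hq).mp hb with rfl | rfl <;> simp

section

variable {p : ℕ}

theorem abs_eq_of_squarefree_of_dvd_three_mul_sq (hp : p.Prime) {d : ℤ} (hd : Squarefree d)
    (h : d ∣ 3 * p ^ 2) : |d| = 1 ∨ |d| = 3 ∨ |d| = p ∨ |d| = 3 * p :=
  abs_eq_of_dvd_prime_mul_prime Nat.prime_three hp
    ((hd.dvd_pow_iff_dvd two_ne_zero).mp (h.trans ⟨3, by push_cast; ring⟩))

theorem isSquare_or_isSquare_three_mul_of_cubic_eq_sq (hp : p.Prime) (h3 : p % 3 = 2) {t w : ℚ}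
    (ht : 0 < t) (h : t ^ 3 + 3 * p * t ^ 2 + 3 * p ^ 2 * t = w ^ 2) :
    IsSquare t ∨ IsSquare (3 * t) := by
  have hp0 : (p : ℤ) ≠ 0 := mod_cast hp.ne_zero
  have hp2 : (p : ℤ) ^ 2 % 3 = 1 := by simp [pow_two, Int.mul_emod, show (p : ℤ) % 3 = 2 by lia]
  obtain ⟨d, e, hd, hde, hsq, hmod⟩ := exists_squarefree_isSquare_mul_of_cubic_eq_sq
    (k := 3 * p) (l := 3 * p ^ 2) (dvd_mul_right ..) (dvd_mul_right ..) (by lia) ht.ne'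
    (by push_cast; exact h)
  have hd0 : 0 < d :=
    hd.ne_zero.symm.lt_of_le (Int.cast_nonneg_iff.mp (nonneg_of_mul_nonneg_left hsq.nonneg ht))
  rcases abs_eq_of_squarefree_of_dvd_three_mul_sq hp hd ⟨e, hde.symm⟩ with h | h | h | h <;>
    rw [abs_of_pos hd0] at h <;> subst h
  · exact .inl (by simpa using hsq)
  · exact .inr (by simpa using hsq)
  · obtain rfl : e = 3 * p := mul_left_cancel₀ hp0 (by linear_combination hde)
    lia
  · obtain rfl : e = p := mul_left_cancel₀ hd.ne_zero (by linear_combination hde)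
    lia

theorem isSquare_or_isSquare_mul_of_cubic_eq_sq (hp : p.Prime) (h3 : p % 3 = 2) {t w : ℚ}
    (ht : t ≠ 0) (h : t ^ 3 - 6 * p * t ^ 2 - 3 * p ^ 2 * t = w ^ 2) :
    IsSquare t ∨ IsSquare (-3 * t) ∨ IsSquare (-p * t) ∨ IsSquare (3 * p * t) := by
  have hp0 : (p : ℤ) ≠ 0 := mod_cast hp.ne_zero
  have hp2 : (p : ℤ) ^ 2 % 3 = 1 := by simp [pow_two, Int.mul_emod, show (p : ℤ) % 3 = 2 by lia]
  obtain ⟨d, e, hd, hde, hsq, hmod⟩ := exists_squarefree_isSquare_mul_of_cubic_eq_sq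
    (k := 3 * (-2 * p)) (l := 3 * (-p ^ 2)) (dvd_mul_right ..) (dvd_mul_right ..) (by lia) ht
    (w := w) (by push_cast; linear_combination h)
  rcases abs_eq_of_squarefree_of_dvd_three_mul_sq hp hd ⟨-e, by linear_combination hde⟩ with
    h | h | h | h <;> rcases eq_or_eq_neg_of_abs_eq h with rfl | rfl
  · exact .inl (by simpa using hsq)
  · lia
  · lia
  · exact .inr (.inl (by simpa using hsq))
  · obtain rfl : e = -(3 * p) := mul_left_cancel₀ hp0 (by linear_combination hde)
    lia
  · exact .inr (.inr (.inl (by simpa using hsq)))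
  · exact .inr (.inr (.inr (by simpa using hsq)))
  · obtain rfl : e = p := mul_left_cancel₀ hd.ne_zero (by linear_combination hde)
    lia

end

/-! ### The curve `y² = x³ - D³` -/

/-- The field `ℚ(ω)` with `ω` a primitive cube root of unity; `⟨a, b⟩` stands for `a + bω`. -/
abbrev EisensteinField :=
  QuadraticAlgebra ℚ (-1) (-1)

namespace EisensteinField

instance : Fact (∀ r : ℚ, r ^ 2 ≠ -1 + -1 * r) :=
  ⟨fun r h ↦ by nlinarith [sq_nonneg (r + 1 / 2)]⟩

theorem isSquare_neg_three : IsSquare (-3 : EisensteinField) :=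
  ⟨⟨1, 2⟩, by ext <;> norm_num [QuadraticAlgebra.re_ofNat, QuadraticAlgebra.im_ofNat]⟩

theorem isSquare_ratCast_of_isSquare_or_isSquare_neg_three_mul {r : ℚ}
    (h : IsSquare r ∨ IsSquare (-3 * r)) : IsSquare (r : EisensteinField) := by
  rcases h with h | h
  · exact h.map (Rat.castHom _)
  · have h3r : IsSquare ((-3 * r : ℚ) : EisensteinField) := h.map (Rat.castHom _)
    push_cast at h3r
    simpa using h3r.div isSquare_neg_three

end EisensteinField

namespace E0twist

open EisensteinField

section

variable {D : ℤ}

instance : (E0twist D).IsCharNeTwoNF :=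
  ⟨rfl, rfl⟩

theorem equation_iff {x y : ℚ} : (E0twist D).Equation x y ↔ y ^ 2 = x ^ 3 - D ^ 3 := by
  rw [equation_iff_of_isCharNeTwoNF]
  simp [E0twist, sub_eq_add_neg]

theorem sq_eq_sub_mul {x y : ℚ} (h : (E0twist D).Nonsingular x y) :
    y ^ 2 = (x - D) * (x ^ 2 + D * x + D ^ 2) := by
  linear_combination equation_iff.mp h.1

/-- The descent map `P ↦ x(P) - Dω` of `y² = x³ - D³`. -/
noncomputable def delta : (E0twist D).Point → EisensteinField :=
  descentMap ⟨0, D⟩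

theorem delta_some {x y : ℚ} (h : (E0twist D).Nonsingular x y) :
    delta (some x y h) = ⟨x, -D⟩ := by
  ext <;> simp [delta]

theorem norm_delta_some {x y : ℚ} (h : (E0twist D).Nonsingular x y) :
    (delta (some x y h)).norm = x ^ 2 + D * x + D ^ 2 := by
  rw [delta_some, QuadraticAlgebra.norm_def]
  ring

theorem isSquare_delta_mul_delta_mul_delta_add (P Q : (E0twist D).Point) :
    IsSquare (delta P * delta Q * delta (P + Q)) := by
  refine isSquare_descentMap_mul_descentMap_mul_descentMap_add ?_ P Q
  ext <;> simp [E0twist, pow_succ]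

variable [NeZero D]

instance : (E0twist D).IsElliptic := by
  have hD : (D : ℚ) ≠ 0 := mod_cast NeZero.ne D
  have hΔ : (E0twist D).Δ = -(432 * (D : ℚ) ^ 6) := by
    simp only [Δ, E0twist, b₂, b₄, b₆, b₈]
    ring
  exact ⟨hΔ ▸ IsUnit.mk0 _ (by simp [hD])⟩

theorem sq_add_mul_add_sq_pos (x : ℚ) : 0 < x ^ 2 + D * x + (D : ℚ) ^ 2 := by
  have hD : (D : ℚ) ≠ 0 := mod_cast NeZero.ne D
  have := sq_pos_of_ne_zero hD
  nlinarith [sq_nonneg (x + D / 2)]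

theorem delta_ne_zero (P : (E0twist D).Point) : delta P ≠ 0 := by
  rcases P with _ | ⟨x, y, h⟩
  · exact one_ne_zero
  · refine QuadraticAlgebra.norm_eq_zero_iff_eq_zero.not.mp ?_
    rw [norm_delta_some]
    exact (sq_add_mul_add_sq_pos x).ne'

/-- The rational point `(D, 0)` of order two. -/
noncomputable def twoTorsionPoint (D : ℤ) [NeZero D] : (E0twist D).Point :=
  some D 0 (equation_iff_nonsingular.mp (equation_iff.mpr (by ring)))

theorem twoTorsionPoint_add_self : twoTorsionPoint D + twoTorsionPoint D = 0 :=
  add_self_of_Y_eq (by simp [negY])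

theorem norm_delta_twoTorsionPoint : (delta (twoTorsionPoint D)).norm = 3 * (D : ℚ) ^ 2 := by
  rw [twoTorsionPoint, norm_delta_some]
  ring

theorem exists_add_self_eq_of_isSquare_delta {P : (E0twist D).Point} (hP : IsSquare (delta P)) :
    ∃ Q, Q + Q = P := by
  rcases P with _ | ⟨x, y, h⟩
  · exact ⟨0, add_zero 0⟩
  rw [delta_some] at hP
  obtain ⟨⟨a, b⟩, hab⟩ := hP
  rw [QuadraticAlgebra.mk_mul_mk] at hab
  have hre : x = a ^ 2 - b ^ 2 := by
    linear_combination congrArg QuadraticAlgebra.re hab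
  have him : (D : ℚ) = b ^ 2 - 2 * a * b := by
    linear_combination -congrArg QuadraticAlgebra.im hab
  have hN : (a ^ 2 - a * b + b ^ 2) ^ 2 = x ^ 2 + D * x + D ^ 2 := by
    rw [hre, him]
    ring
  have hN0 : a ^ 2 - a * b + b ^ 2 ≠ 0 := fun h0 ↦
    (sq_add_mul_add_sq_pos (D := D) x).ne' (by rw [← hN, h0, zero_pow two_ne_zero])
  obtain ⟨s, hs⟩ : ∃ s, s = y / (a ^ 2 - a * b + b ^ 2) := ⟨_, rfl⟩
  have hsN : s * (a ^ 2 - a * b + b ^ 2) = y := by rw [hs, div_mul_cancel₀ _ hN0]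
  have hs2 : s ^ 2 = x - D := by
    apply mul_right_cancel₀ (pow_ne_zero 2 hN0)
    rw [← mul_pow, hsN, hN, sq_eq_sub_mul h]
  -- The elementary symmetric functions of the square roots `s`, `a + bω` and `a + bω²` of the
  -- values of `x(P) - θ` at the three roots `θ` of the cubic.
  apply exists_add_self_eq_some h (σ₁ := s + (2 * a - b))
    (σ₂ := s * (2 * a - b) + (a ^ 2 - a * b + b ^ 2))
  · simp only [E0twist]
    linear_combination 2 * hre + him - hs2
  · simp only [E0twist]
    linear_combination s ^ 2 * (2 * hre + him) - (2 * x + D) * hs2 - hN -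
      2 * (s + 2 * a - b) * hsN

theorem isSquare_norm_delta_add_twoTorsionPoint {P : (E0twist D).Point}
    (hP : IsSquare (3 * (delta P).norm)) :
    IsSquare (delta (P + twoTorsionPoint D)).norm := by
  have hD : (D : ℚ) ≠ 0 := mod_cast NeZero.ne D
  have hN : (delta P).norm ≠ 0 :=
    QuadraticAlgebra.norm_eq_zero_iff_eq_zero.not.mpr (delta_ne_zero P)
  have hmul := (isSquare_delta_mul_delta_mul_delta_add P (twoTorsionPoint D)).map
    QuadraticAlgebra.norm
  rw [map_mul, map_mul, norm_delta_twoTorsionPoint] at hmul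
  have hcancel : (delta (P + twoTorsionPoint D)).norm =
      (delta P).norm * (3 * D ^ 2) * (delta (P + twoTorsionPoint D)).norm * (3 * (delta P).norm) /
        (3 * (delta P).norm * D) ^ 2 := by
    field_simp
  rw [hcancel]
  exact (hmul.mul hP).div (.sq _)

theorem exists_isSquare_delta_mul_and_cubic_eq_sq {x y : ℚ} (h : (E0twist D).Nonsingular x y)
    (hN : IsSquare (delta (some x y h)).norm) :
    ∃ t w : ℚ, t ≠ 0 ∧ IsSquare (delta (some x y h) * t) ∧
      t ^ 3 - 6 * D * t ^ 2 - 3 * D ^ 2 * t = w ^ 2 := by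
  rw [norm_delta_some] at hN
  obtain ⟨v, hv⟩ := hN
  have hD : (D : ℚ) ≠ 0 := mod_cast NeZero.ne D
  have hv0 : v ≠ 0 := left_ne_zero_of_mul (hv ▸ (sq_add_mul_add_sq_pos x).ne')
  have hyv : (y / v) ^ 2 = x - D := by
    rw [div_pow, div_eq_iff (pow_ne_zero 2 hv0), sq_eq_sub_mul h, hv, sq]
  refine ⟨2 * x + D + 2 * v, 2 * (2 * x + D + 2 * v) * (y / v), ?_, ?_, ?_⟩
  · have hprod : (2 * x + D + 2 * v) * (2 * x + D - 2 * v) = -3 * D ^ 2 := by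
      linear_combination 4 * hv
    exact left_ne_zero_of_mul (b := 2 * x + D - 2 * v) (by simp [hprod, hD])
  · -- Hilbert 90: `α * (2v + Tr α) = (α + v) ^ 2` when `N α = v ^ 2`.
    refine ⟨⟨x + v, -D⟩, ?_⟩
    rw [delta_some, QuadraticAlgebra.mk_mul_mk]
    ext <;> simp only [QuadraticAlgebra.re_mul, QuadraticAlgebra.im_mul,
      QuadraticAlgebra.re_ratCast, QuadraticAlgebra.im_ratCast, Rat.cast_id]
    · linear_combination hv
    · ring
  · rw [mul_pow, hyv]
    linear_combination (-4 * (2 * x + D + 2 * v)) * hv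

theorem mem_range_of_isSquare_delta {P : (E0twist D).Point} (hP : IsSquare (delta P)) :
    P ∈ (nsmulAddMonoidHom 2 : (E0twist D).Point →+ (E0twist D).Point).range := by
  obtain ⟨Q, rfl⟩ := exists_add_self_eq_of_isSquare_delta hP
  exact ⟨Q, two_nsmul Q⟩

theorem add_mem_range_of_isSquare_delta_mul_delta {P Q : (E0twist D).Point}
    (hPQ : IsSquare (delta P * delta Q)) :
    P + Q ∈ (nsmulAddMonoidHom 2 : (E0twist D).Point →+ (E0twist D).Point).range := by
  apply mem_range_of_isSquare_delta
  have h0 : delta P * delta Q ≠ 0 := mul_ne_zero (delta_ne_zero P) (delta_ne_zero Q)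
  simpa [h0] using (isSquare_delta_mul_delta_mul_delta_add P Q).div hPQ

end

section

variable {p : ℕ}

theorem isSquare_norm_delta_or_isSquare_three_mul_norm_delta (hp : p.Prime) (h3 : p % 3 = 2)
    (P : (E0twist p).Point) :
    IsSquare (delta P).norm ∨ IsSquare (3 * (delta P).norm) := by
  have : NeZero p := ⟨hp.ne_zero⟩
  rcases P with _ | ⟨x, y, h⟩
  · exact .inl (IsSquare.one.map QuadraticAlgebra.norm)
  have hE := sq_eq_sub_mul h
  have hN := sq_add_mul_add_sq_pos (D := p) x
  rw [norm_delta_some]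
  obtain ⟨t, rfl⟩ : ∃ t, x = t + p := ⟨x - p, (sub_add_cancel ..).symm⟩
  push_cast at hE hN ⊢
  rw [add_sub_cancel_right] at hE
  have ht : 0 ≤ t := nonneg_of_mul_nonneg_left (hE ▸ sq_nonneg y) hN
  rcases ht.eq_or_lt with rfl | ht
  · exact .inr ⟨3 * p, by ring⟩
  have hNt : (t + p) ^ 2 + p * (t + p) + (p : ℚ) ^ 2 = t * (y / t) ^ 2 := by
    field_simp
    linear_combination -hE
  rw [hNt, ← mul_assoc]
  refine (isSquare_or_isSquare_three_mul_of_cubic_eq_sq hp h3 ht (w := y) ?_).imp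
    (·.mul (.sq _)) (·.mul (.sq _))
  linear_combination -hE

theorem isSquare_delta_or_isSquare_mul_delta (hp : p.Prime) (h3 : p % 3 = 2)
    {P : (E0twist p).Point} (hP : IsSquare (delta P).norm) :
    IsSquare (delta P) ∨ IsSquare (-p * delta P) := by
  have : NeZero p := ⟨hp.ne_zero⟩
  rcases P with _ | ⟨x, y, h⟩
  · exact .inl .one
  obtain ⟨t, w, ht, hsq, hw⟩ := exists_isSquare_delta_mul_and_cubic_eq_sq h hP
  have htK : (t : EisensteinField) ≠ 0 := mod_cast ht
  have hone (hsq_t : IsSquare t ∨ IsSquare (-3 * t)) : IsSquare (delta (some x y h)) := by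
    have := isSquare_ratCast_of_isSquare_or_isSquare_neg_three_mul hsq_t
    exact mul_div_cancel_right₀ (delta _) htK ▸ hsq.div this
  have hneg (hsq_t : IsSquare (-p * t) ∨ IsSquare (-3 * (-p * t))) :
      IsSquare (-p * delta (some x y h)) := by
    have := isSquare_ratCast_of_isSquare_or_isSquare_neg_three_mul hsq_t
    push_cast at this
    exact isSquare_mul_of_isSquare_mul_of_isSquare_mul htK this (mul_comm (delta _) _ ▸ hsq)
  rcases isSquare_or_isSquare_mul_of_cubic_eq_sq hp h3 ht hw with h | h | h | h
  · exact .inl (hone (.inl h))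
  · exact .inl (hone (.inr h))
  · exact .inr (hneg (.inl h))
  · exact .inr (hneg (.inr (by convert h using 1; ring)))

theorem exists_closure_sup_range_eq_top (hp : p.Prime) (h3 : p % 3 = 2) [NeZero p] :
    ∃ Q : (E0twist p).Point,
      AddSubgroup.closure {Q} ⊔ AddSubgroup.closure {twoTorsionPoint p} ⊔
        (nsmulAddMonoidHom 2 : (E0twist p).Point →+ (E0twist p).Point).range = ⊤ := by
  obtain ⟨Q, hQ⟩ : ∃ Q : (E0twist p).Point, ∀ P : (E0twist p).Point,
      IsSquare (-p * delta P) → IsSquare (-p * delta Q) := by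
    by_cases h : ∃ Q : (E0twist p).Point, IsSquare (-p * delta Q)
    · exact h.imp fun Q hQ _ _ ↦ hQ
    · exact ⟨0, fun P hP ↦ absurd ⟨P, hP⟩ h⟩
  refine ⟨Q, eq_top_iff.mpr fun P _ ↦ ?_⟩
  set S := AddSubgroup.closure {Q} ⊔ AddSubgroup.closure {twoTorsionPoint p} ⊔
    (nsmulAddMonoidHom 2 : (E0twist p).Point →+ (E0twist p).Point).range
  have hQS : Q ∈ S :=
    AddSubgroup.mem_sup_left (AddSubgroup.mem_sup_left (AddSubgroup.mem_closure_singleton_self Q))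
  have hTS : twoTorsionPoint p ∈ S :=
    AddSubgroup.mem_sup_left (AddSubgroup.mem_sup_right (AddSubgroup.mem_closure_singleton_self _))
  have hmem {R : (E0twist p).Point} (hR : IsSquare (delta R).norm) : R ∈ S := by
    rcases isSquare_delta_or_isSquare_mul_delta hp h3 hR with h | h
    · exact AddSubgroup.mem_sup_right (mem_range_of_isSquare_delta h)
    · refine (S.add_mem_cancel_right hQS).mp ?_
      refine AddSubgroup.mem_sup_right (add_mem_range_of_isSquare_delta_mul_delta ?_)
      have hp0 : (-p : EisensteinField) ≠ 0 := neg_ne_zero.mpr (mod_cast hp.ne_zero)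
      exact isSquare_mul_of_isSquare_mul_of_isSquare_mul hp0 (mul_comm _ (delta R) ▸ h) (hQ R h)
  rcases isSquare_norm_delta_or_isSquare_three_mul_norm_delta hp h3 P with h | h
  · exact hmem h
  · exact (S.add_mem_cancel_right hTS).mp (hmem (isSquare_norm_delta_add_twoTorsionPoint h))

end

end E0twist

open E0twist in
theorem prime_twist_rank_le_one_general (p : ℕ) (hp : p.Prime) (h3 : p % 3 = 2) :
    mwRank (E0twist (p : ℤ)) ≤ 1 := by
  have : NeZero p := ⟨hp.ne_zero⟩
  obtain ⟨Q, hQ⟩ := exists_closure_sup_range_eq_top hp h3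
  have hfin := finiteIndex_range_nsmul_of_closure_sup_eq_top
    (Set.toFinite ({Q} ∪ {twoTorsionPoint p})) two_ne_zero (by rwa [AddSubgroup.closure_union])
  have := fg_point_of_finiteIndex_range_two_nsmul hfin
  have hT : AddSubgroup.closure {twoTorsionPoint p} ≤ AddCommGroup.torsion (E0twist p).Point := by
    rw [AddSubgroup.closure_le, Set.singleton_subset_iff]
    exact isOfFinAddOrder_iff_nsmul_eq_zero.mpr
      ⟨2, two_pos, (two_nsmul _).trans twoTorsionPoint_add_self⟩
  rw [mwRank, ← Cardinal.mk_singleton Q]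
  refine rank_rat_tensor_le_of_sup_eq_top (n := 2) (by norm_num) (top_le_iff.mp ?_)
  exact hQ ▸ sup_le_sup_right (sup_le_sup_left hT _) _

theorem prime_twist_rank_le_one (p : ℕ) (hp : p.Prime)
    (hcong : p % 12 = 5 ∨ p % 12 = 11) :
    mwRank (E0twist (p : ℤ)) ≤ 1 :=
  prime_twist_rank_le_one_general p hp (by lia)
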